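/- Let rk be a rank function satisfying (A1)–(A3). Let A, B, C, A', B', C', M, N, P be points with rk{A,B,C} = 3, rk{A',B',C'} = 3, rk{A,B,C,A',B',C'} = 4, rk{A,B,C,M} = 3, rk{A,B,C,N} = 3, rk{A,B,C,P} = 3, rk{A',B',C',M} = 3, rk{A',B',C',N} = 3, rk{A',B',C',P} = 3 and rk{M,N} = 2. Then rk{M,N,P} = 2; that is, the intersection of two distinct planes in a 3D space is contained in the line spanned by two of its distinct points M and N. -/

import Mathlib

/-!
Two flats `X` and `Y` that both contain `S` keep their ranks when `S` is added to them, so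
submodularity bounds `rk (X ∪ Y) + rk S` by `rk X + rk Y`. For two planes spanning a space of
rank `4` this reads `4 + rk S ≤ 3 + 3`.
-/

/-- A submodular function on a lattice. A rank function on finite sets of points is one by (A3),
since `⊔` and `⊓` are then union and intersection. -/
def IsSubmodular {L R : Type*} [Lattice L] [Add R] [LE R] (f : L → R) : Prop :=
  ∀ x y, f (x ⊔ y) + f (x ⊓ y) ≤ f x + f y

namespace IsSubmodular

variable {L R : Type*} [Lattice L] [AddCommMonoid R] [PartialOrder R] {f : L → R} {x y z w : L}

section OrderedAddMonoid

variable [IsOrderedAddMonoid R]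

theorem map_sup_add_map_le (hf : IsSubmodular f) (hmono : Monotone f) (hx : z ≤ x) (hy : z ≤ y) :
    f (x ⊔ y) + f z ≤ f x + f y :=
  calc
    f (x ⊔ y) + f z ≤ f (x ⊔ y) + f (x ⊓ y) := by grw [hmono (le_inf hx hy)]
    _ ≤ f x + f y := hf x y

theorem map_sup_add_map_le_of_map_sup_eq (hf : IsSubmodular f) (hmono : Monotone f)
    (hx : f (x ⊔ z) = f x) (hy : f (y ⊔ z) = f y) : f (x ⊔ y) + f z ≤ f x + f y :=
  calc
    f (x ⊔ y) + f z ≤ f ((x ⊔ z) ⊔ (y ⊔ z)) + f z := by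
      grw [hmono (sup_le_sup (le_sup_left : x ≤ x ⊔ z) (le_sup_left : y ≤ y ⊔ z))]
    _ ≤ f (x ⊔ z) + f (y ⊔ z) := hf.map_sup_add_map_le hmono le_sup_right le_sup_right
    _ = f x + f y := by rw [hx, hy]

end OrderedAddMonoid

variable [IsOrderedCancelAddMonoid R]

theorem map_sup_sup_eq (hf : IsSubmodular f) (hmono : Monotone f)
    (hz : f (x ⊔ z) = f x) (hw : f (x ⊔ w) = f x) : f (x ⊔ (z ⊔ w)) = f x := by
  have h : f (x ⊔ (z ⊔ w)) + f x ≤ f x + f x :=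
    calc
      f (x ⊔ (z ⊔ w)) + f x = f ((x ⊔ z) ⊔ (x ⊔ w)) + f x := by rw [sup_sup_distrib_left]
      _ ≤ f (x ⊔ z) + f (x ⊔ w) := hf.map_sup_add_map_le hmono le_sup_left le_sup_left
      _ = f x + f x := by rw [hz, hw]
  exact (le_of_add_le_add_right h).antisymm (hmono le_sup_left)

theorem map_union_eq_of_forall_mem {P : Type*} [DecidableEq P] {rk : Finset P → R}
    {X S : Finset P} (hrk : IsSubmodular rk) (hmono : Monotone rk)
    (hS : ∀ p ∈ S, rk (X ∪ {p}) = rk X) : rk (X ∪ S) = rk X := by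
  induction S using Finset.induction_on with
  | empty => rw [Finset.union_empty]
  | insert p S _ ih =>
    rw [Finset.forall_mem_insert] at hS
    exact hrk.map_sup_sup_eq hmono hS.1 (ih hS.2)

end IsSubmodular

theorem stmt_7_general {P R : Type*} [DecidableEq P] [AddCommMonoid R] [PartialOrder R]
    [IsOrderedCancelAddMonoid R] {rk : Finset P → R} (hmono : Monotone rk)
    (hrk : IsSubmodular rk) {X Y S T : Finset P}
    (hX : ∀ p ∈ S, rk (X ∪ {p}) = rk X) (hY : ∀ p ∈ S, rk (Y ∪ {p}) = rk Y)
    (hTS : T ⊆ S) (hT : rk (X ∪ Y) + rk T = rk X + rk Y) : rk S = rk T := by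
  have hXS : rk (X ∪ S) = rk X := hrk.map_union_eq_of_forall_mem hmono hX
  have hYS : rk (Y ∪ S) = rk Y := hrk.map_union_eq_of_forall_mem hmono hY
  have h : rk (X ∪ Y) + rk S ≤ rk (X ∪ Y) + rk T :=
    (hrk.map_sup_add_map_le_of_map_sup_eq hmono hXS hYS).trans_eq hT.symm
  exact (le_of_add_le_add_left h).antisymm (hmono hTS)

/-- The intersection of two distinct planes in a 3D space is
contained in the line spanned by two of its distinct points M and N. -/
theorem stmt_7 {P : Type*} [DecidableEq P] (rk : Finset P → ℕ)
    (hA1 : ∀ X : Finset P, rk X ≤ X.card)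
    (hA2 : ∀ X Y : Finset P, X ⊆ Y → rk X ≤ rk Y)
    (hA3 : ∀ X Y : Finset P, rk (X ∪ Y) + rk (X ∩ Y) ≤ rk X + rk Y)
    (A B C A' B' C' M N Q : P)
    (hABC : rk {A, B, C} = 3)
    (hA'B'C' : rk {A', B', C'} = 3)
    (hdistinct : rk {A, B, C, A', B', C'} = 4)
    (hM1 : rk {A, B, C, M} = 3)
    (hN1 : rk {A, B, C, N} = 3)
    (hQ1 : rk {A, B, C, Q} = 3)
    (hM2 : rk {A', B', C', M} = 3)
    (hN2 : rk {A', B', C', N} = 3)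
    (hQ2 : rk {A', B', C', Q} = 3)
    (hMN : rk {M, N} = 2) :
    rk {M, N, Q} = 2 := by
  rw [← hMN]
  exact stmt_7_general (X := {A, B, C}) (Y := {A', B', C'}) (fun _ _ ↦ hA2 _ _) hA3
    (by simp [hABC, hM1, hN1, hQ1]) (by simp [hA'B'C', hM2, hN2, hQ2]) (by simp)
    (by simp only [Finset.insert_union, Finset.singleton_union, hdistinct, hMN, hABC, hA'B'C'])
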